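/- arXiv:2510.15858 — 2 statements merged into one kernel-verified Lean document; each statement's English description precedes it below -/
import Mathlib

section
/- π is transcendental over ℚ; consequently π does not belong to any subfield K of ℝ that is finite-dimensional over ℚ, and in particular π lies in no quadratic tower. Hence squaring the circle by ruler and compass is impossible. -/
noncomputable section

/-- A quadratic tower: a finite chain `K 0 ⊆ K 1 ⊆ ⋯ ⊆ K n` of subfields of `ℝ`
(viewed as intermediate fields of `ℚ ⊆ ℝ`), with `K 0` the prime subfield
(the copy of `ℚ` in `ℝ`) and each relative degree `[K (i+1) : K i] = 2`. -/
structure QuadraticTower (n : ℕ) where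
  K : Fin (n + 1) → IntermediateField ℚ ℝ
  bot : K 0 = ⊥
  le : ∀ i : Fin n, K i.castSucc ≤ K i.succ
  deg : ∀ i : Fin n,
    Module.finrank (K i.castSucc) (IntermediateField.extendScalars (le i)) = 2

/-!
The argument is Niven's form of Lindemann's proof. If `z` is algebraic and `exp z = -1`, then the
product of `exp w + 1` over all conjugates `w` of `z` vanishes. Expanding it turns it into a sum of
`exp x`, where `x` runs over the multiset of all subset sums of the conjugates; this multiset is
stable under the Galois group and contains `0`, so its nonzero part `M`, which is again stable,
satisfies `∑ exp x = N` for a negative integer `N`.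

Hermite's construction yields, for each large prime `p`, an integer `n` prime to `p` and an integral
polynomial `g` such that `n * exp x - p * g x` is at most `c ^ p / (p - 1)!` for all `x` in `M`
at once. By Galois stability the sum of `g x` over `M` is rational, and clearing the denominators of
`M` by a fixed integer `a` costs only a factor `a ^ O(p)`. So there are integers `m`, prime to `p`,
and `k` with `|m * N - p * k| < 1`; hence `p` divides `m * N`, which fails once `p > |N|`.

For `π` take `z = π * I`. The fields of a quadratic tower are finite, hence algebraic, over `ℚ`.
-/

section Integrality

open Polynomial

variable {R A : Type*} [CommRing R]

theorem isIntegral_pow_smul_aeval [CommRing A] [Algebra R A] {a : R} {x : A}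
    (hx : IsIntegral R (a • x)) {g : R[X]} {d : ℕ} (hd : g.natDegree ≤ d) :
    IsIntegral R (a ^ d • aeval x g) := by
  have hscale : aeval (a • x) (g.scaleRoots a) = a ^ g.natDegree • aeval x g := by
    simpa only [aeval_def, Algebra.smul_def, map_pow] using
      scaleRoots_eval₂_mul (p := g) (algebraMap R A) x a
  rw [← Nat.sub_add_cancel hd, pow_add, mul_smul, ← hscale]
  exact (adjoin_le_integralClosure hx (aeval_mem_adjoin_singleton R (a • x))).smul _

theorem exists_algebraMap_eq_of_isIntegral_of_forall_gal (F : Type*) [IsIntegrallyClosed R]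
    [Field F] [Algebra R F] [IsFractionRing R F] [Field A] [Algebra R A] [Algebra F A]
    [IsScalarTower R F A] [IsGalois F A] {x : A} (hx : IsIntegral R x)
    (hfix : ∀ σ : Gal(A/F), σ x = x) : ∃ r : R, algebraMap R A r = x := by
  obtain ⟨y, rfl⟩ := (InfiniteGalois.mem_range_algebraMap_iff_fixed x).2 hfix
  have hy : IsIntegral R y := (isIntegral_algebraMap_iff (algebraMap F A).injective).1 hx
  obtain ⟨r, rfl⟩ := IsIntegrallyClosed.isIntegral_iff.1 hy
  exact ⟨r, IsScalarTower.algebraMap_apply R F A r⟩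

theorem exists_coeff_zero_ne_zero_and_aeval_eq_zero [IsDomain R] [CommRing A] [IsDomain A]
    [Algebra R A] [Algebra.IsAlgebraic R A] {s : Finset A} (hs : 0 ∉ s) :
    ∃ f : R[X], f.coeff 0 ≠ 0 ∧ ∀ x ∈ s, aeval x f = 0 := by
  have hroot (x : s) : ∃ f : R[X], f.coeff 0 ≠ 0 ∧ aeval (x : A) f = 0 :=
    (Algebra.IsAlgebraic.isAlgebraic (x : A)).exists_nonzero_coeff_and_aeval_eq_zero
      (mem_nonZeroDivisors_of_ne_zero (ne_of_mem_of_not_mem x.2 hs))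
  choose f hf₀ hf using hroot
  refine ⟨∏ x, f x, ?_, fun x hx ↦ ?_⟩
  · simpa only [coeff_zero_prod, Finset.prod_ne_zero_iff] using fun x _ ↦ hf₀ x
  · rw [map_prod]
    exact Finset.prod_eq_zero (Finset.mem_univ ⟨x, hx⟩) (hf ⟨x, hx⟩)

end Integrality

section Splitting

open Polynomial

universe u

variable {F : Type u} [Field F]

theorem exists_isGalois_and_splits [PerfectField F] (f : F[X]) :
    ∃ (E : Type u) (_ : Field E) (_ : Algebra F E),
      IsGalois F E ∧ (f.map (algebraMap F E)).Splits :=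
  ⟨f.SplittingField, inferInstance, inferInstance, IsGalois.mk, SplittingField.splits f⟩

theorem map_aroots_of_splits {A B : Type*} [Field A] [CommRing B] [IsDomain B] [Algebra F A]
    [Algebra F B] {f : F[X]} (hf : (f.map (algebraMap F A)).Splits) (σ : A →ₐ[F] B) :
    (f.aroots A).map σ = f.aroots B := by
  have hroots := hf.roots_map (σ : A →+* B)
  rw [Polynomial.map_map, σ.comp_algebraMap] at hroots
  exact hroots.symm

end Splitting

section Multiset

variable {α β R : Type*}

theorem powerset_map_eq_map_powerset (f : α → β) (s : Multiset α) :
    (s.map f).powerset = s.powerset.map (Multiset.map f) := by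
  induction s using Multiset.induction_on with
  | empty => simp
  | cons a s ih => simp [ih, Multiset.map_map]

theorem prod_map_add_one_eq_sum_powerset [CommSemiring R] (f : α → R) (s : Multiset α) :
    (s.map fun x ↦ f x + 1).prod = (s.powerset.map fun t ↦ (t.map f).prod).sum := by
  rw [Multiset.prod_map_add, ← Multiset.antidiagonal_map_fst, Multiset.map_map]
  simp

theorem norm_sum_map_le_card_mul {E : Type*} [SeminormedAddCommGroup E] {s : Multiset α}
    {f : α → E} {C : ℝ} (hf : ∀ x ∈ s, ‖f x‖ ≤ C) : ‖(s.map f).sum‖ ≤ s.card * C := by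
  grw [norm_multiset_sum_le, Multiset.sum_le_card_nsmul _ C (by simpa using hf)]
  simp

theorem norm_mul_sum_map_sub_mul_sum_map_le {K : Type*} [NormedField K] {s : Multiset α}
    {u v : α → K} {m q : K} {C : ℝ} (b : K) (h : ∀ x ∈ s, ‖m * u x - q * v x‖ ≤ C) :
    ‖b * m * (s.map u).sum - q * (b * (s.map v).sum)‖ ≤ ‖b‖ * (s.card * C) := by
  have hfactor : b * m * (s.map u).sum - q * (b * (s.map v).sum) =
      b * (s.map fun x ↦ m * u x - q * v x).sum := by
    rw [Multiset.sum_map_sub, Multiset.sum_map_mul_left, Multiset.sum_map_mul_left]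
    ring
  rw [hfactor, norm_mul]
  gcongr
  exact norm_sum_map_le_card_mul h

end Multiset

section Approximation

open Filter

theorem ne_intCast_of_eventually_norm_mul_sub_lt_one {z : ℂ}
    (hz : ∀ᶠ p : ℕ in atTop, p.Prime → ∃ m k : ℤ, ¬ (p : ℤ) ∣ m ∧ ‖m * z - p * k‖ < 1)
    {N : ℤ} (hN : N ≠ 0) : z ≠ N := by
  rintro rfl
  have hprimes : ∃ᶠ p : ℕ in atTop, p.Prime :=
    Nat.frequently_atTop_iff_infinite.2 Nat.infinite_setOfPred_prime
  obtain ⟨p, hp, happrox, hNp⟩ :=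
    (hprimes.and_eventually (hz.and (eventually_gt_atTop N.natAbs))).exists
  obtain ⟨m, k, hpm, hlt⟩ := happrox hp
  have hzero : m * N - p * k = 0 := by
    rw [← Int.abs_lt_one_iff]
    rw [← Int.cast_natCast, ← Int.cast_mul, ← Int.cast_mul, ← Int.cast_sub,
      Complex.norm_intCast] at hlt
    exact_mod_cast hlt
  have hdvd : (p : ℤ) ∣ m * N := ⟨k, sub_eq_zero.1 hzero⟩
  rcases (Nat.prime_iff_prime_int.1 hp).dvd_or_dvd hdvd with h | h
  · exact hpm h
  · exact hNp.not_ge (Nat.le_of_dvd (Int.natAbs_pos.2 hN) (Int.natCast_dvd.1 h))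

end Approximation

section GaloisStable

open Filter Polynomial Complex

variable {A : Type*} [Field A]

theorem exists_intCast_eq_pow_mul_sum_aeval [Algebra ℚ A] [IsGalois ℚ A] {M : Multiset A}
    (hM : ∀ σ : Gal(A/ℚ), M.map σ = M) {a : ℤ} (ha : ∀ x ∈ M, IsIntegral ℤ (a • x))
    {g : ℤ[X]} {d : ℕ} (hd : g.natDegree ≤ d) :
    ∃ k : ℤ, (k : A) = a ^ d * (M.map fun x ↦ aeval x g).sum := by
  refine exists_algebraMap_eq_of_isIntegral_of_forall_gal ℚ ?_ fun σ ↦ ?_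
  · rw [← Multiset.sum_map_mul_left]
    refine IsIntegral.multiset_sum fun y hy ↦ ?_
    obtain ⟨x, hx, rfl⟩ := Multiset.mem_map.1 hy
    simpa [zsmul_eq_mul] using isIntegral_pow_smul_aeval (ha x hx) hd
  · have hσ (x : A) : σ (aeval x g) = aeval (σ x) g :=
      (aeval_algHom_apply (σ.toRingHom.toIntAlgHom) x g).symm
    simp only [map_mul, map_pow, map_intCast, map_multiset_sum, Multiset.map_map,
      Function.comp_def, hσ]
    conv_rhs => rw [← hM σ, Multiset.map_map]
    rfl

theorem eventually_exists_norm_mul_sum_exp_sub_lt [Algebra ℚ A] [IsGalois ℚ A] (φ : A →+* ℂ)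
    {M : Multiset A} (hM : ∀ σ : Gal(A/ℚ), M.map σ = M) (h₀ : 0 ∉ M) {ε : ℝ} (hε : 0 < ε) :
    ∀ᶠ p : ℕ in atTop, p.Prime → ∃ m k : ℤ, ¬ (p : ℤ) ∣ m ∧
      ‖m * (M.map fun x ↦ exp (φ x)).sum - p * k‖ < ε := by
  classical
  have : Algebra.IsAlgebraic ℤ A := (IsFractionRing.comap_isAlgebraic_iff (K := ℚ)).2 inferInstance
  obtain ⟨a, ha₀, ha⟩ := Algebra.IsAlgebraic.exists_integral_multiples ℤ M.toFinset
  obtain ⟨f, hf₀, hf⟩ := exists_coeff_zero_ne_zero_and_aeval_eq_zero (R := ℤ) (s := M.toFinset)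
    (by simpa using h₀)
  simp only [Multiset.mem_toFinset] at ha hf
  have hφ (g : ℤ[X]) (x : A) : φ (aeval x g) = aeval (φ x) g :=
    (aeval_algHom_apply φ.toIntAlgHom x g).symm
  have hroot (x : A) (hx : x ∈ M) : φ x ∈ f.aroots ℂ :=
    mem_aroots.2 ⟨fun h ↦ hf₀ (by simp [h]), by rw [← hφ, hf x hx, map_zero]⟩
  rw [coeff_zero_eq_eval_zero] at hf₀
  obtain ⟨c, hc⟩ := LindemannWeierstrass.exp_polynomial_approx f hf₀
  have hlim := FloorSemiring.tendsto_mul_pow_div_factorial_sub_atTop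
    (M.card : ℝ) (|(a : ℝ)| ^ f.natDegree * c) 1
  filter_upwards [hlim.eventually_lt_const hε, eventually_gt_atTop (f.eval 0).natAbs,
    eventually_gt_atTop a.natAbs] with p hpε hpf hpa hp
  have hp' : Prime (p : ℤ) := Nat.prime_iff_prime_int.1 hp
  obtain ⟨n, hpn, g, hg, happrox⟩ := hc p hpf hp
  obtain ⟨k, hk⟩ := exists_intCast_eq_pow_mul_sum_aeval hM ha (hg.trans (Nat.sub_le _ 1))
  refine ⟨a ^ (p * f.natDegree) * n, k, hp'.not_dvd_mul (fun hdvd ↦ ?_) hpn, ?_⟩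
  · have hpa' : p ∣ a.natAbs := Int.natCast_dvd.1 (hp'.dvd_of_dvd_pow hdvd)
    exact hpa.not_ge (Nat.le_of_dvd (Int.natAbs_pos.2 ha₀) hpa')
  · have hkφ : (k : ℂ) = a ^ (p * f.natDegree) * (M.map fun x ↦ aeval (φ x) g).sum := by
      simpa [map_multiset_sum, Multiset.map_map, hφ] using congrArg φ hk
    calc ‖(a ^ (p * f.natDegree) * n : ℤ) * (M.map fun x ↦ exp (φ x)).sum - p * (k : ℂ)‖
        ≤ ‖(a : ℂ) ^ (p * f.natDegree)‖ * (M.card * (c ^ p / (p - 1).factorial)) := by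
          rw [hkφ, Int.cast_mul, Int.cast_pow]
          refine norm_mul_sum_map_sub_mul_sum_map_le _ fun x hx ↦ ?_
          simpa only [zsmul_eq_mul, nsmul_eq_mul] using happrox (hroot x hx)
      _ = M.card * (|(a : ℝ)| ^ f.natDegree * c) ^ p / (p - 1).factorial := by
          rw [norm_pow, norm_intCast]
          ring
      _ < ε := hpε

theorem sum_exp_ne_intCast [Algebra ℚ A] [IsGalois ℚ A] (φ : A →+* ℂ) {M : Multiset A}
    (hM : ∀ σ : Gal(A/ℚ), M.map σ = M) (h₀ : 0 ∉ M) {N : ℤ} (hN : N ≠ 0) :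
    (M.map fun x ↦ exp (φ x)).sum ≠ N :=
  ne_intCast_of_eventually_norm_mul_sub_lt_one
    (eventually_exists_norm_mul_sum_exp_sub_lt φ hM h₀ one_pos) hN

theorem sum_exp_ne_zero [Algebra ℚ A] [IsGalois ℚ A] (φ : A →+* ℂ) {M : Multiset A}
    (hM : ∀ σ : Gal(A/ℚ), M.map σ = M) (h₀ : 0 ∈ M) :
    (M.map fun x ↦ exp (φ x)).sum ≠ 0 := by
  classical
  have hstable (σ : Gal(A/ℚ)) : (M.filter (· ≠ 0)).map σ = M.filter (· ≠ 0) := by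
    conv_rhs => rw [← hM σ, Multiset.filter_map]
    simp
  have hcount : -(M.count 0 : ℤ) ≠ 0 := by simpa using h₀
  have hsum := sum_exp_ne_intCast φ hstable (by simp) hcount
  contrapose! hsum
  have hsplit : M = .replicate (M.count 0) 0 + M.filter (· ≠ 0) := by
    rw [← Multiset.filter_eq', Multiset.filter_add_not]
  rw [hsplit] at hsum
  simpa [eq_neg_iff_add_eq_zero, add_comm] using hsum

theorem prod_exp_add_one_ne_zero [Algebra ℚ A] [IsGalois ℚ A] (φ : A →+* ℂ) {S : Multiset A}
    (hS : ∀ σ : Gal(A/ℚ), S.map σ = S) : (S.map fun x ↦ exp (φ x) + 1).prod ≠ 0 := by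
  have hstable (σ : Gal(A/ℚ)) : (S.powerset.map Multiset.sum).map σ =
      S.powerset.map Multiset.sum := by
    conv_rhs => rw [← hS σ, powerset_map_eq_map_powerset]
    simp [Multiset.map_map, map_multiset_sum]
  have hsum := sum_exp_ne_zero φ hstable (Multiset.mem_map.2 ⟨0, by simp, by simp⟩)
  rw [prod_map_add_one_eq_sum_powerset]
  simpa [Multiset.map_map, map_multiset_sum, exp_multiset_sum] using hsum

theorem prod_aroots_exp_add_one_ne_zero (f : ℚ[X]) :
    ((f.aroots ℂ).map fun z ↦ exp z + 1).prod ≠ 0 := by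
  obtain ⟨E, _, _, _, hsplits⟩ := exists_isGalois_and_splits f
  let φ : E →ₐ[ℚ] ℂ := IsAlgClosed.lift
  rw [← map_aroots_of_splits hsplits φ, Multiset.map_map]
  exact prod_exp_add_one_ne_zero φ.toRingHom fun σ ↦ map_aroots_of_splits hsplits σ.toAlgHom

theorem exp_ne_neg_one_of_isAlgebraic {z : ℂ} (hz : IsAlgebraic ℚ z) : exp z ≠ -1 := by
  obtain ⟨f, hf, hfz⟩ := hz
  intro hexp
  exact prod_aroots_exp_add_one_ne_zero f <| Multiset.prod_eq_zero <|
    Multiset.mem_map.2 ⟨z, mem_aroots.2 ⟨hf, hfz⟩, by simp [hexp]⟩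

theorem transcendental_pi : Transcendental ℚ Real.pi := fun hπ ↦
  exp_ne_neg_one_of_isAlgebraic ((hπ.algebraMap (A := ℂ)).mul isIntegral_rat_I.isAlgebraic)
    exp_pi_mul_I

end GaloisStable

section Fields

theorem notMem_of_transcendental {F E : Type*} [Field F] [Field E] [Algebra F E] {x : E}
    (hx : Transcendental F x) (K : IntermediateField F E) [Algebra.IsAlgebraic F K] : x ∉ K :=
  fun hxK ↦ hx <| IntermediateField.isAlgebraic_iff.1 <|
    Algebra.IsAlgebraic.isAlgebraic (⟨x, hxK⟩ : K)

theorem QuadraticTower.finiteDimensional {n : ℕ} (T : QuadraticTower n) (i : Fin (n + 1)) :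
    FiniteDimensional ℚ (T.K i) := by
  induction i using Fin.induction with
  | zero => rw [T.bot]; infer_instance
  | succ i ih =>
    have : FiniteDimensional (T.K i.castSucc) (IntermediateField.extendScalars (T.le i)) :=
      FiniteDimensional.of_finrank_pos (by simp [T.deg i])
    exact FiniteDimensional.trans ℚ (T.K i.castSucc) (IntermediateField.extendScalars (T.le i))

end Fields

/-- `π` is transcendental over `ℚ`; consequently `π` lies in no subfield of `ℝ`
that is finite-dimensional over `ℚ`, and in particular in no quadratic tower.
Hence squaring the circle by ruler and compass is impossible. -/
theorem pi_transcendental_not_constructible :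
    Transcendental ℚ Real.pi ∧
      (∀ K : IntermediateField ℚ ℝ, FiniteDimensional ℚ K → Real.pi ∉ K) ∧
      ¬ ∃ (n : ℕ) (T : QuadraticTower n), Real.pi ∈ T.K (Fin.last n) := by
  refine ⟨transcendental_pi, fun K _ ↦ notMem_of_transcendental transcendental_pi K, ?_⟩
  rintro ⟨n, T, hπ⟩
  have := T.finiteDimensional (Fin.last n)
  exact notMem_of_transcendental transcendental_pi _ hπ
end
end

section
/- The real number log 2 (the natural logarithm of 2) is transcendental over ℚ; in particular log 2 is not algebraic over ℚ and lies in no finite-degree subfield extension of ℚ inside ℝ. -/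
noncomputable section

/-! The product of the Galois conjugates of a nonzero `ℤ`-combination of exponentials `exp x`, with
`x` in a number field `K`, is again such a combination, and a nonzero one as element of the group
ring `ℤ[K]`, which is a domain since `K` is torsion-free. After multiplication by a sum of conjugate
exponentials, its constant term is nonzero. If its value vanished, Hermite's simultaneous
approximations `exp x ≈ p g(x) / n`, with `p` a large prime not dividing `n`, would turn it into an
integer (by Galois invariance) that is smaller than `1` but not divisible by `p`. Hence
`exp : ℤ[K] → ℂ` is injective, which contains the Hermite–Lindemann theorem and, by
`exp (log 2) = 2`, the transcendence of `log 2`. -/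

open Polynomial Filter Topology

section Approximation

lemma tendsto_pow_div_factorial_pred_atTop (x : ℝ) :
    Tendsto (fun n : ℕ => x ^ n / ((n - 1).factorial : ℝ)) atTop (𝓝 0) := by
  rw [← tendsto_add_atTop_iff_nat 1]
  simpa only [pow_succ', mul_div_assoc, mul_zero, Nat.add_sub_cancel] using
    (FloorSemiring.tendsto_pow_div_factorial_atTop x).const_mul x

lemma exists_eval_zero_ne_zero_and_aeval_eq_zero {ι R A : Type*} [CommRing R] [IsDomain R]
    [CommRing A] [IsDomain A] [Algebra R A] (s : Finset ι) (β : ι → A)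
    (hβ : ∀ i ∈ s, IsAlgebraic R (β i)) (hβ₀ : ∀ i ∈ s, β i ≠ 0) :
    ∃ f : R[X], f.eval 0 ≠ 0 ∧ ∀ i ∈ s, aeval (β i) f = 0 := by
  have hfactor (i : s) : ∃ f : R[X], f.coeff 0 ≠ 0 ∧ aeval (β i) f = 0 :=
    (hβ i i.2).exists_nonzero_coeff_and_aeval_eq_zero
      (mem_nonZeroDivisors_of_ne_zero (hβ₀ i i.2))
  choose f hf₀ hf using hfactor
  refine ⟨∏ i, f i, ?_, fun i hi => ?_⟩
  · rw [eval_prod]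
    exact Finset.prod_ne_zero_iff.2 fun i _ => coeff_zero_eq_eval_zero (f i) ▸ hf₀ i
  · rw [map_prod]
    exact Finset.prod_eq_zero (Finset.mem_univ ⟨i, hi⟩) (hf ⟨i, hi⟩)

lemma exists_exp_approx {ι : Type*} (s : Finset ι) (β : ι → ℂ)
    (hβ : ∀ i ∈ s, IsAlgebraic ℤ (β i)) (hβ₀ : ∀ i ∈ s, β i ≠ 0) :
    ∃ (c : ℝ) (d B : ℕ), ∀ p > B, p.Prime → ∃ n : ℤ, ¬ (p : ℤ) ∣ n ∧
      ∃ g : ℤ[X], g.natDegree ≤ p * d ∧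
        ∀ i ∈ s, ‖n * Complex.exp (β i) - p * aeval (β i) g‖ ≤ c ^ p / (p - 1).factorial := by
  obtain ⟨f, hf₀, hf⟩ := exists_eval_zero_ne_zero_and_aeval_eq_zero s β hβ hβ₀
  obtain ⟨c, hc⟩ := LindemannWeierstrass.exp_polynomial_approx f hf₀
  refine ⟨c, f.natDegree, (f.eval 0).natAbs, fun p hpB hp => ?_⟩
  obtain ⟨n, hn, g, hg, happrox⟩ := hc p hpB hp
  refine ⟨n, hn, g, hg.trans (Nat.sub_le _ _), fun i hi => ?_⟩
  have hroot : β i ∈ f.aroots ℂ :=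
    mem_aroots.2 ⟨fun h => hf₀ (by rw [h, eval_zero]), hf i hi⟩
  simpa only [zsmul_eq_mul, nsmul_eq_mul] using happrox hroot

lemma norm_sum_mul_le_sum_norm_mul {ι A : Type*} [NonUnitalSeminormedRing A] (s : Finset ι)
    (m u : ι → A) {ε : ℝ} (hu : ∀ i ∈ s, ‖u i‖ ≤ ε) :
    ‖∑ i ∈ s, m i * u i‖ ≤ (∑ i ∈ s, ‖m i‖) * ε := by
  rw [Finset.sum_mul]
  exact norm_sum_le_of_le _ fun i hi => norm_mul_le_of_le le_rfl (hu i hi)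

lemma not_intCast_dvd_pow_mul_mul {p : ℕ} (hp : p.Prime) {a n k : ℤ} (ha : a ≠ 0)
    (hap : a.natAbs < p) (hn : ¬ (p : ℤ) ∣ n) (hk : k ≠ 0) (hkp : k.natAbs < p) (N : ℕ) :
    ¬ (p : ℤ) ∣ a ^ N * (n * k) := by
  have hndvd {b : ℤ} (hb : b ≠ 0) (hbp : b.natAbs < p) : ¬ (p : ℤ) ∣ b := fun h =>
    hb (Int.eq_zero_of_dvd_of_natAbs_lt_natAbs h hbp)
  have hpℤ : Prime (p : ℤ) := Nat.prime_iff_prime_int.1 hp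
  exact hpℤ.not_dvd_mul (fun h => hndvd ha hap (hpℤ.dvd_of_dvd_pow h))
    (hpℤ.not_dvd_mul hn (hndvd hk hkp))

theorem intCast_add_sum_mul_exp_ne_zero {ι : Type*} (s : Finset ι) (β : ι → ℂ) (m : ι → ℤ)
    (hβ : ∀ i ∈ s, IsAlgebraic ℤ (β i)) (hβ₀ : ∀ i ∈ s, β i ≠ 0) {a : ℤ} (ha : a ≠ 0)
    (hint : ∀ (g : ℤ[X]) (N : ℕ), g.natDegree ≤ N →
      ∃ y : ℤ, (y : ℂ) = a ^ N * ∑ i ∈ s, m i * aeval (β i) g)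
    {k : ℤ} (hk : k ≠ 0) :
    k + ∑ i ∈ s, m i * Complex.exp (β i) ≠ 0 := by
  intro hsum
  obtain ⟨c, d, B, happrox⟩ := exists_exp_approx s β hβ hβ₀
  have hlim : Tendsto (fun p : ℕ => (∑ i ∈ s, ‖(m i : ℂ)‖) *
      ((|(a : ℝ)| ^ d * c) ^ p / (p - 1).factorial)) atTop (𝓝 0) := by
    simpa only [mul_zero] using
      (tendsto_pow_div_factorial_pred_atTop (|(a : ℝ)| ^ d * c)).const_mul _
  obtain ⟨P, hP⟩ := eventually_atTop.1 ((hlim.eventually_lt_const one_pos).and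
    (eventually_gt_atTop (B + a.natAbs + k.natAbs)))
  obtain ⟨p, hPp, hp⟩ := Nat.exists_infinite_primes P
  obtain ⟨hsmall, hlarge⟩ := hP p hPp
  obtain ⟨n, hn, g, hg, hbound⟩ := happrox p (by omega) hp
  obtain ⟨y, hy⟩ := hint g (p * d) hg
  have hvalue : ((a ^ (p * d) * (n * k) + p * y : ℤ) : ℂ) =
      -(a ^ (p * d) * ∑ i ∈ s, m i * (n * Complex.exp (β i) - p * aeval (β i) g)) := by
    simp only [mul_sub, mul_left_comm (m _ : ℂ), Finset.sum_sub_distrib, ← Finset.mul_sum]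
    push_cast
    rw [hy]
    linear_combination (a : ℂ) ^ (p * d) * n * hsum
  have hnorm : ‖((a ^ (p * d) * (n * k) + p * y : ℤ) : ℂ)‖ < 1 := by
    calc ‖((a ^ (p * d) * (n * k) + p * y : ℤ) : ℂ)‖
        = |(a : ℝ)| ^ (p * d) *
            ‖∑ i ∈ s, (m i : ℂ) * (n * Complex.exp (β i) - p * aeval (β i) g)‖ := by
          rw [hvalue, norm_neg, norm_mul, norm_pow, Complex.norm_intCast]
      _ ≤ |(a : ℝ)| ^ (p * d) * ((∑ i ∈ s, ‖(m i : ℂ)‖) * (c ^ p / (p - 1).factorial)) := by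
          gcongr
          exact norm_sum_mul_le_sum_norm_mul _ _ _ hbound
      _ = (∑ i ∈ s, ‖(m i : ℂ)‖) * ((|(a : ℝ)| ^ d * c) ^ p / (p - 1).factorial) := by
          rw [mul_pow, ← pow_mul, mul_comm d p]
          ring
      _ < 1 := hsmall
  have hzero : a ^ (p * d) * (n * k) + p * y = 0 := by
    rw [Complex.norm_intCast] at hnorm
    exact Int.abs_lt_one_iff.1 (by exact_mod_cast hnorm)
  exact not_intCast_dvd_pow_mul_mul hp ha (by omega) hn hk (by omega) (p * d)
    ⟨-y, by linear_combination hzero⟩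

end Approximation

section Integrality

lemma isIntegral_algebraMap_pow_mul_aeval {R A : Type*} [CommRing R] [CommRing A] [Algebra R A]
    {r : R} {x : A} (hx : IsIntegral R (algebraMap R A r * x)) {g : R[X]} {N : ℕ}
    (hN : g.natDegree ≤ N) : IsIntegral R (algebraMap R A r ^ N * aeval x g) := by
  have hscale : algebraMap R A r ^ N * aeval x g = algebraMap R A r ^ (N - g.natDegree) *
      aeval (algebraMap R A r * x) (g.scaleRoots r) := by
    rw [aeval_def (algebraMap R A r * x), scaleRoots_eval₂_mul, ← mul_assoc, ← pow_add,
      Nat.sub_add_cancel hN, aeval_def]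
  rw [hscale]
  exact (isIntegral_algebraMap.pow _).mul
    (adjoin_le_integralClosure hx (aeval_mem_adjoin_singleton R _))

lemma exists_algebraMap_eq_of_isIntegral_of_fixed {A F K : Type*} [CommRing A] [IsDomain A]
    [IsIntegrallyClosed A] [Field F] [Algebra A F] [IsFractionRing A F] [Field K] [Algebra F K]
    [Algebra A K] [IsScalarTower A F K] [IsGalois F K] {z : K} (hz : IsIntegral A z)
    (hfix : ∀ σ : Gal(K/F), σ z = z) : ∃ y : A, algebraMap A K y = z := by
  obtain ⟨q, rfl⟩ := IntermediateField.mem_bot.1 ((InfiniteGalois.mem_bot_iff_fixed z).2 hfix)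
  obtain ⟨y, rfl⟩ := IsIntegrallyClosed.isIntegral_iff.1
    ((isIntegral_algebraMap_iff (algebraMap F K).injective).1 hz)
  exact ⟨y, IsScalarTower.algebraMap_apply A F K y⟩

lemma exists_intCast_eq_pow_mul_sum_aeval_s18 {K : Type*} [Field K] [CharZero K] [IsGalois ℚ K]
    {s : Finset K} {m : K → ℤ} (hs : ∀ (σ : Gal(K/ℚ)) x, σ x ∈ s ↔ x ∈ s)
    (hm : ∀ (σ : Gal(K/ℚ)) x, m (σ x) = m x) {a : ℤ} (ha : ∀ x ∈ s, IsIntegral ℤ (a • x))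
    {g : ℤ[X]} {N : ℕ} (hN : g.natDegree ≤ N) :
    ∃ y : ℤ, (y : K) = a ^ N * ∑ x ∈ s, m x * aeval x g := by
  refine exists_algebraMap_eq_of_isIntegral_of_fixed (A := ℤ) (F := ℚ) ?_ fun σ => ?_
  · rw [Finset.mul_sum]
    refine IsIntegral.sum _ fun x hx => ?_
    rw [mul_left_comm]
    have hax : IsIntegral ℤ (algebraMap ℤ K a * x) := by simpa using ha x hx
    exact (isIntegral_algebraMap (x := m x)).mul (isIntegral_algebraMap_pow_mul_aeval hax hN)
  · have hsum : ∑ x ∈ s, (m x : K) * aeval (σ x) g = ∑ x ∈ s, (m x : K) * aeval x g :=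
      Finset.sum_equiv σ.toEquiv (fun x => (hs σ x).symm) fun x _ => by
        rw [← hm σ x]; rfl
    have haeval (x : K) : σ (aeval x g) = aeval (σ x) g :=
      (aeval_algHom_apply (σ.toAlgHom.restrictScalars ℤ) x g).symm
    simp only [map_mul, map_pow, map_sum, map_intCast, haeval, hsum]

end Integrality

section GroupRing

open AddMonoidAlgebra

variable {R G M : Type*} [CommSemiring R] [Group G]

section Conjugation

variable [AddCommMonoid M] [DistribMulAction G M]

/-- The action of `g : G` on the monoid algebra `R[M]` induced by an action of `G` on `M`: it sends
`single x r` to `single (g • x) r`. It is used for a Galois group acting on its field. -/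
def conjugation (g : G) : AddMonoidAlgebra R M ≃ₐ[R] AddMonoidAlgebra R M :=
  AddMonoidAlgebra.domCongr R R (DistribMulAction.toAddEquiv M g)

lemma conjugation_single (g : G) (x : M) (r : R) :
    conjugation g (single x r) = single (g • x) r :=
  AddMonoidAlgebra.domCongr_single _ _ _

lemma conjugation_one (F : AddMonoidAlgebra R M) : conjugation (1 : G) F = F := by
  ext x
  simp [conjugation, coeff_domCongr]

lemma conjugation_mul (g h : G) (F : AddMonoidAlgebra R M) :
    conjugation (g * h) F = conjugation g (conjugation h F) := by
  ext x
  simp [conjugation, mul_smul, coeff_domCongr]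

lemma coeff_smul_of_conjugation_eq {g : G} {F : AddMonoidAlgebra R M}
    (hF : conjugation g F = F) (x : M) : F.coeff (g • x) = F.coeff x := by
  conv_lhs => rw [← hF]
  simp [conjugation, coeff_domCongr]

lemma conjugation_prod_conjugation [Fintype G] (g : G) (F : AddMonoidAlgebra R M) :
    conjugation g (∏ h : G, conjugation h F) = ∏ h : G, conjugation h F := by
  simp only [map_prod, ← conjugation_mul]
  exact Fintype.prod_equiv (Equiv.mulLeft g) _ _ fun _ => rfl

end Conjugation

lemma exists_dvd_and_coeff_smul_eq_and_coeff_zero_ne_zero [Finite G] [AddCommGroup M]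
    [DistribMulAction G M] [NoZeroDivisors R] [CharZero R] [UniqueSums M]
    {F : AddMonoidAlgebra R M} (hF : F ≠ 0) :
    ∃ E : AddMonoidAlgebra R M, F ∣ E ∧ (∀ (g : G) x, E.coeff (g • x) = E.coeff x) ∧
      E.coeff 0 ≠ 0 := by
  have := Fintype.ofFinite G
  set N := ∏ g : G, conjugation g F
  have hfix (g : G) : conjugation g N = N := conjugation_prod_conjugation g F
  have hN₀ : N ≠ 0 := Finset.prod_ne_zero_iff.2 fun g _ =>
    (map_ne_zero_iff _ (conjugation g).injective).2 hF
  obtain ⟨x, hx⟩ : ∃ x, N.coeff x ≠ 0 := by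
    by_contra! h
    exact hN₀ (by ext x; simp [h])
  set T : AddMonoidAlgebra R M := ∑ g : G, single (g • -x) 1 with hT
  have hTfix (g : G) : conjugation g T = T := by
    simp only [hT, map_sum, conjugation_single, ← mul_smul]
    exact Fintype.sum_equiv (Equiv.mulLeft g) _ _ fun _ => rfl
  refine ⟨N * T, ?_, fun g => coeff_smul_of_conjugation_eq (by rw [map_mul, hfix, hTfix]), ?_⟩
  · have hdvd : conjugation (1 : G) F ∣ N := Finset.dvd_prod_of_mem _ (Finset.mem_univ 1)
    exact (conjugation_one (G := G) F ▸ hdvd).mul_right T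
  · have hcoeff : (N * T).coeff 0 = Nat.card G * N.coeff x := by
      simp [hT, Finset.mul_sum, coeff_smul_of_conjugation_eq (hfix _)]
    rw [hcoeff]
    exact mul_ne_zero (Nat.cast_ne_zero.2 Nat.card_pos.ne') hx

lemma transcendental_single_one {R M : Type*} [CommRing R] [AddMonoid M] {x : M}
    (hx : Function.Injective fun n : ℕ => n • x) :
    Transcendental R (single x 1 : AddMonoidAlgebra R M) := by
  classical
  rw [transcendental_iff]
  intro p hp
  ext n
  have hcoeff : (aeval (single x 1 : AddMonoidAlgebra R M) p).coeff (n • x) = p.coeff n := by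
    rw [aeval_eq_sum_range]
    simpa [single_pow, Finsupp.single_apply, hx.eq_iff] using
      fun h => (coeff_eq_zero_of_natDegree_lt h).symm
  rw [← hcoeff, hp, AddMonoidAlgebra.coeff_zero, Finsupp.zero_apply, Polynomial.coeff_zero]

end GroupRing

section HermiteLindemann

open AddMonoidAlgebra IntermediateField

lemma exists_mem_finiteDimensional_normal {F L : Type*} [Field F] [Field L] [Algebra F L]
    [IsAlgClosed L] {x : L} (hx : IsAlgebraic F x) :
    ∃ K : IntermediateField F L, x ∈ K ∧ FiniteDimensional F K ∧ Normal F K := by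
  have hsplit : (minpoly F x).IsSplittingField F (adjoin F ((minpoly F x).rootSet L)) :=
    adjoin_rootSet_isSplittingField (IsAlgClosed.splits _)
  refine ⟨_, subset_adjoin F _ ?_, hsplit.finiteDimensional _ _,
    Normal.of_isSplittingField (minpoly F x)⟩
  exact mem_rootSet.2 ⟨minpoly.ne_zero hx.isIntegral, minpoly.aeval F x⟩

/-- The ring homomorphism `ℤ[K] → ℂ` sending `single x 1` to `exp (φ x)`. Its injectivity expresses
the linear independence over `ℤ` of the exponentials of distinct elements of `φ(K)`. -/
def expLift {K : Type*} [Semiring K] (φ : K →+* ℂ) : AddMonoidAlgebra ℤ K →ₐ[ℤ] ℂ :=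
  AddMonoidAlgebra.lift ℤ ℂ K
    (Complex.expMonoidHom.comp (AddMonoidHom.toMultiplicative φ.toAddMonoidHom))

lemma expLift_apply {K : Type*} [Semiring K] (φ : K →+* ℂ) (F : AddMonoidAlgebra ℤ K) :
    expLift φ F = ∑ x ∈ F.coeff.support, F.coeff x * Complex.exp (φ x) := by
  simp [expLift, AddMonoidAlgebra.lift_apply, Finsupp.sum]

lemma expLift_single_one {K : Type*} [Semiring K] (φ : K →+* ℂ) (x : K) :
    expLift φ (single x 1) = Complex.exp (φ x) := by
  simp [expLift]

lemma expLift_ne_zero_of_coeff_galois_eq {K : Type*} [Field K] [CharZero K] [IsGalois ℚ K]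
    (φ : K →+* ℂ) {E : AddMonoidAlgebra ℤ K}
    (hE : ∀ (σ : Gal(K/ℚ)) x, E.coeff (σ x) = E.coeff x) (hE₀ : E.coeff 0 ≠ 0) :
    expLift φ E ≠ 0 := by
  classical
  have hs (σ : Gal(K/ℚ)) (x : K) :
      σ x ∈ E.coeff.support.erase 0 ↔ x ∈ E.coeff.support.erase 0 := by
    simp [hE]
  have : Algebra.IsAlgebraic ℤ K :=
    IsFractionRing.comap_isAlgebraic_iff.2 (inferInstance : Algebra.IsAlgebraic ℚ K)
  obtain ⟨a, ha, hint⟩ :=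
    Algebra.IsAlgebraic.exists_integral_multiples ℤ (E.coeff.support.erase 0)
  have hvalue : expLift φ E = E.coeff 0 +
      ∑ x ∈ E.coeff.support.erase 0, E.coeff x * Complex.exp (φ x) := by
    rw [expLift_apply, ← Finset.add_sum_erase _ _ (Finsupp.mem_support_iff.2 hE₀), map_zero φ,
      Complex.exp_zero, mul_one]
  rw [hvalue]
  refine intCast_add_sum_mul_exp_ne_zero _ φ E.coeff (fun x _ => ?_) (fun x hx => ?_) ha
    (fun g N hN => ?_) hE₀
  · exact (Algebra.IsAlgebraic.isAlgebraic x).algHom φ.toIntAlgHom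
  · exact (map_ne_zero φ).2 (Finset.ne_of_mem_erase hx)
  · obtain ⟨y, hy⟩ := exists_intCast_eq_pow_mul_sum_aeval_s18 hs hE hint hN
    have haeval (x : K) : φ (aeval x g) = aeval (φ x) g :=
      (aeval_algHom_apply φ.toIntAlgHom x g).symm
    refine ⟨y, ?_⟩
    simpa only [map_intCast, map_mul, map_pow, map_sum, haeval] using congrArg φ hy

theorem expLift_injective {K : Type*} [Field K] [NumberField K] [IsGalois ℚ K] (φ : K →+* ℂ) :
    Function.Injective (expLift φ) := by
  rw [injective_iff_map_eq_zero]
  intro F hF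
  by_contra hF₀
  obtain ⟨E, hFE, hE, hE₀⟩ :=
    exists_dvd_and_coeff_smul_eq_and_coeff_zero_ne_zero (G := Gal(K/ℚ)) hF₀
  exact expLift_ne_zero_of_coeff_galois_eq φ hE hE₀
    (eq_zero_of_zero_dvd (hF ▸ map_dvd (expLift φ) hFE))

theorem transcendental_exp {α : ℂ} (hα : IsAlgebraic ℚ α) (hα₀ : α ≠ 0) :
    Transcendental ℚ (Complex.exp α) := by
  obtain ⟨K, hαK, _, hnormal⟩ := exists_mem_finiteDimensional_normal hα
  have : NumberField K := ⟨⟩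
  have : IsGalois ℚ K := { to_normal := hnormal }
  let x : K := ⟨α, hαK⟩
  have hx : x ≠ 0 := fun h => hα₀ (congrArg Subtype.val h)
  have hsingle : Transcendental ℤ (single x 1 : AddMonoidAlgebra ℤ K) :=
    transcendental_single_one
      (injective_nsmul_iff_not_isOfFinAddOrder.2 (not_isOfFinAddOrder_of_isAddTorsionFree hx))
  have hexp : Transcendental ℤ (expLift (algebraMap K ℂ) (single x 1)) :=
    fun h => hsingle ((isAlgebraic_algHom_iff _ (expLift_injective (algebraMap K ℂ))).1 h)
  rw [expLift_single_one] at hexp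
  exact fun h => hexp ((IsFractionRing.isAlgebraic_iff ℤ ℚ ℂ).2 h)

theorem transcendental_log {a : ℝ} (ha : IsAlgebraic ℚ a) (ha₀ : 0 < a) (ha₁ : a ≠ 1) :
    Transcendental ℚ (Real.log a) := by
  intro hlog
  have hexp : Transcendental ℚ (Complex.exp (Real.log a)) :=
    transcendental_exp (hlog.algebraMap (A := ℂ))
      (Complex.ofReal_ne_zero.2 (Real.log_ne_zero_of_pos_of_ne_one ha₀ ha₁))
  rw [← Complex.ofReal_exp, Real.exp_log ha₀] at hexp
  exact hexp (ha.algebraMap (A := ℂ))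

end HermiteLindemann

theorem log_two_transcendental_general {a : ℝ} (ha : IsAlgebraic ℚ a) (ha₀ : 0 < a)
    (ha₁ : a ≠ 1) :
    Transcendental ℚ (Real.log a) ∧
      ¬ IsAlgebraic ℚ (Real.log a) ∧
      ∀ K : IntermediateField ℚ ℝ, FiniteDimensional ℚ K → Real.log a ∉ K := by
  have hlog := transcendental_log ha ha₀ ha₁
  refine ⟨hlog, hlog, fun K _ hmem => hlog ?_⟩
  exact IntermediateField.isAlgebraic_iff.1
    (Algebra.IsAlgebraic.isAlgebraic (R := ℚ) (⟨Real.log a, hmem⟩ : K))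

/-- `log 2` is transcendental over `ℚ`; in particular it is not algebraic over `ℚ`
and lies in no finite-degree subfield extension of `ℚ` inside `ℝ`. -/
theorem log_two_transcendental :
    Transcendental ℚ (Real.log 2) ∧
      ¬ IsAlgebraic ℚ (Real.log 2) ∧
      ∀ K : IntermediateField ℚ ℝ, FiniteDimensional ℚ K → Real.log 2 ∉ K :=
  log_two_transcendental_general (isAlgebraic_natCast 2) two_pos (by norm_num)
end
end
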